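/- arXiv:1510.08175 — 3 statements merged into one kernel-verified Lean document; each statement's English description precedes it below -/
import Mathlib

section
/- (Theorem 3, Ai–Zhang) Suppose eTRS satisfies the Slater condition. Then strong duality fails for eTRS (i.e., p* ≠ d*) if and only if there exist multipliers λ > 0 and μ > 0 such that: (1) H(λ) := A + λI is positive semidefinite with rank(H(λ)) = n − 1, and (2) the linear system H(λ)x = a − (μ/2)b has two solutions x1 and x2 satisfying ‖x1‖² = Δ, ‖x2‖² = Δ, and (bᵀx1 − c)(bᵀx2 − c) < 0. -/
open Matrix

/-- The smallest eigenvalue of a real (symmetric) matrix. -/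
noncomputable def lambdaMin {ι : Type} [Fintype ι] (M : Matrix ι ι ℝ) : ℝ :=
  sInf {μ : ℝ | ∃ v : ι → ℝ, v ≠ 0 ∧ M.mulVec v = μ • v}

/-- The multiplicity of the smallest eigenvalue: the dimension of Null(M - λmin(M)·I). -/
noncomputable def eigMult {ι : Type} [Fintype ι] [DecidableEq ι] (M : Matrix ι ι ℝ) : ℕ :=
  Module.finrank ℝ (LinearMap.ker (M - lambdaMin M • (1 : Matrix ι ι ℝ)).mulVecLin)

/-- The bordered matrix D(t) = [[t, -aᵀ],[-a, A]]. -/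
noncomputable def borderD {n : ℕ} (A : Matrix (Fin n) (Fin n) ℝ) (a : Fin n → ℝ) (t : ℝ) :
    Matrix (Unit ⊕ Fin n) (Unit ⊕ Fin n) ℝ :=
  Matrix.fromBlocks (Matrix.of fun (_ : Unit) (_ : Unit) => t)
    (Matrix.of fun (_ : Unit) (j : Fin n) => -a j)
    (Matrix.of fun (i : Fin n) (_ : Unit) => -a i) A

/-- The bordered matrix D(t,λ) = [[t, (-a + (λ/2)b)ᵀ],[-a + (λ/2)b, A]]. -/
noncomputable def borderD2 {n : ℕ} (A : Matrix (Fin n) (Fin n) ℝ) (a b : Fin n → ℝ)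
    (t l : ℝ) : Matrix (Unit ⊕ Fin n) (Unit ⊕ Fin n) ℝ :=
  borderD A (fun j => a j - (l / 2) * b j) t

/-- The objective xᵀAx - 2aᵀx. -/
noncomputable def objQ {n : ℕ} (A : Matrix (Fin n) (Fin n) ℝ) (a : Fin n → ℝ)
    (x : Fin n → ℝ) : ℝ :=
  x ⬝ᵥ A.mulVec x - 2 * (a ⬝ᵥ x)

/-- The optimal value p* of eTRS. -/
noncomputable def pstar {n : ℕ} (A : Matrix (Fin n) (Fin n) ℝ) (a b : Fin n → ℝ)
    (c Δ : ℝ) : ℝ :=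
  sInf {v : ℝ | ∃ x : Fin n → ℝ, x ⬝ᵥ x ≤ Δ ∧ b ⬝ᵥ x ≤ c ∧ v = objQ A a x}

/-- The Lagrangian of eTRS. -/
noncomputable def lagr {n : ℕ} (A : Matrix (Fin n) (Fin n) ℝ) (a b : Fin n → ℝ)
    (c Δ : ℝ) (x : Fin n → ℝ) (l1 l2 : ℝ) : ℝ :=
  objQ A a x + l1 * (x ⬝ᵥ x - Δ) + l2 * (b ⬝ᵥ x - c)

/-- The Lagrangian dual value d* of eTRS:
the supremum over λ1, λ2 ≥ 0 of inf_x of the Lagrangian, encoded as the supremum of all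
values that are lower bounds of the Lagrangian for some admissible multipliers. -/
noncomputable def dstar {n : ℕ} (A : Matrix (Fin n) (Fin n) ℝ) (a b : Fin n → ℝ)
    (c Δ : ℝ) : ℝ :=
  sSup {v : ℝ | ∃ l1 l2 : ℝ, 0 ≤ l1 ∧ 0 ≤ l2 ∧ ∀ x : Fin n → ℝ, v ≤ lagr A a b c Δ x l1 l2}

/-- x is a global optimal solution of eTRS. -/
def isOptimal {n : ℕ} (A : Matrix (Fin n) (Fin n) ℝ) (a b : Fin n → ℝ)
    (c Δ : ℝ) (x : Fin n → ℝ) : Prop :=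
  x ⬝ᵥ x ≤ Δ ∧ b ⬝ᵥ x ≤ c ∧
    ∀ y : Fin n → ℝ, y ⬝ᵥ y ≤ Δ → b ⬝ᵥ y ≤ c → objQ A a x ≤ objQ A a y

/-- The dual objective k(t,λ) = (Δ+1)·λmin(D(t,λ)) - t - λc. -/
noncomputable def ktl {n : ℕ} (A : Matrix (Fin n) (Fin n) ℝ) (a b : Fin n → ℝ)
    (c Δ : ℝ) (t l : ℝ) : ℝ :=
  (Δ + 1) * lambdaMin (borderD2 A a b t l) - t - l * c

lemma aux_symm {n : ℕ} {H : Matrix (Fin n) (Fin n) ℝ} (hH : H.IsHermitian) (x y : Fin n → ℝ) :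
    x ⬝ᵥ H.mulVec y = y ⬝ᵥ H.mulVec x := by
  have h : Hᵀ = H := by simpa [Matrix.IsHermitian] using hH
  rw [dotProduct_mulVec, ← mulVec_transpose, h, dotProduct_comm]

lemma aux_self_pos {n : ℕ} {u : Fin n → ℝ} (hu : u ≠ 0) : 0 < u ⬝ᵥ u := by
  have h0 : 0 ≤ u ⬝ᵥ u := Finset.sum_nonneg fun i _ => mul_self_nonneg _
  rcases h0.lt_or_eq with h | h
  · exact h
  · exact absurd (dotProduct_self_eq_zero.1 h.symm) hu

/-- Expansion of the quadratic along a line. -/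
lemma aux_expand {n : ℕ} {H : Matrix (Fin n) (Fin n) ℝ} (hH : H.IsHermitian)
    (w x d : Fin n → ℝ) (t : ℝ) :
    objQ H w (x + t • d) = objQ H w x + 2 * t * (d ⬝ᵥ (H.mulVec x - w))
      + t ^ 2 * (d ⬝ᵥ H.mulVec d) := by
  have h := aux_symm hH x d
  have h2 := dotProduct_comm w d
  simp only [objQ, mulVec_add, mulVec_smul, dotProduct_add, add_dotProduct, smul_dotProduct,
    dotProduct_smul, smul_eq_mul, dotProduct_sub]
  rw [h, h2]; ring

lemma aux_first_order {n : ℕ} {H : Matrix (Fin n) (Fin n) ℝ} (hH : H.PosSemidef)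
    (w x : Fin n → ℝ) (hx : ∀ y, objQ H w x ≤ objQ H w y) : H.mulVec x = w := by
  by_contra hne
  set d := H.mulVec x - w with hd
  have hd0 : 0 < d ⬝ᵥ d := aux_self_pos (sub_ne_zero.2 hne)
  have hK : 0 ≤ d ⬝ᵥ H.mulVec d := by simpa using hH.dotProduct_mulVec_nonneg d
  set P := d ⬝ᵥ d
  set K := d ⬝ᵥ H.mulVec d
  have h := hx (x + (-(P / (K + 1))) • d)
  rw [aux_expand hH.1] at h
  change _ ≤ _ + 2 * _ * P + _ * K at h
  have e : 2 * (-(P / (K + 1))) * P + (-(P / (K + 1))) ^ 2 * K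
      = - (P ^ 2 * (K + 2) / (K + 1) ^ 2) := by
    field_simp; ring
  have : 0 < P ^ 2 * (K + 2) / (K + 1) ^ 2 := by positivity
  linarith

lemma aux_min {n : ℕ} {H : Matrix (Fin n) (Fin n) ℝ} (hH : H.IsHermitian)
    (w x y : Fin n → ℝ) (hx : H.mulVec x = w) :
    objQ H w y = objQ H w x + (y - x) ⬝ᵥ H.mulVec (y - x) := by
  have h := aux_expand hH w x (y - x) 1
  rw [hx] at h
  simpa using h

lemma aux_root {n : ℕ} (p u : Fin n → ℝ) (Δ : ℝ) (hp : p ⬝ᵥ p < Δ) (hu : u ≠ 0) :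
    ∃ t : ℝ, 0 < t ∧ (p + t • u) ⬝ᵥ (p + t • u) = Δ := by
  have hA := aux_self_pos hu
  set K := u ⬝ᵥ u
  set B := p ⬝ᵥ u with hB
  have hs : B ^ 2 < B ^ 2 + K * (Δ - p ⬝ᵥ p) := by
    have := mul_pos hA (sub_pos.2 hp); linarith
  have hs0 : 0 ≤ B ^ 2 + K * (Δ - p ⬝ᵥ p) := le_trans (sq_nonneg _) hs.le
  refine ⟨(-B + √(B ^ 2 + K * (Δ - p ⬝ᵥ p))) / K, ?_, ?_⟩
  · apply div_pos _ hA
    have : B < √(B ^ 2 + K * (Δ - p ⬝ᵥ p)) := Real.lt_sqrt_of_sq_lt hs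
    linarith
  · have hsq := Real.sq_sqrt hs0
    set S := √(B ^ 2 + K * (Δ - p ⬝ᵥ p))
    simp only [dotProduct_add, add_dotProduct, smul_dotProduct, dotProduct_smul, smul_eq_mul]
    rw [dotProduct_comm u p, ← hB]
    change p ⬝ᵥ p + (-B + S) / K * B + (-B + S) / K * (B + (-B + S) / K * K) = Δ
    have hK : K ≠ 0 := hA.ne'
    field_simp
    linarith

lemma aux_compact {n : ℕ} (b : Fin n → ℝ) (c Δ : ℝ) :
    IsCompact {x : Fin n → ℝ | x ⬝ᵥ x ≤ Δ ∧ b ⬝ᵥ x ≤ c} := by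
  apply Metric.isCompact_of_isClosed_isBounded
  · exact (isClosed_le (f := fun x : Fin n → ℝ => x ⬝ᵥ x) (by fun_prop) continuous_const).inter
      (isClosed_le (f := fun x : Fin n → ℝ => b ⬝ᵥ x) (by fun_prop) continuous_const)
  · refine (Metric.isBounded_iff_subset_closedBall 0).2 ⟨√Δ, fun x hx => ?_⟩
    rw [mem_closedBall_zero_iff]
    refine (pi_norm_le_iff_of_nonneg (Real.sqrt_nonneg _)).2 fun i => ?_
    apply Real.abs_le_sqrt
    refine le_trans ?_ hx.1
    rw [sq]
    exact Finset.single_le_sum (f := fun i => x i * x i) (fun j _ => mul_self_nonneg _)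
      (Finset.mem_univ i)

lemma aux_objQ_cont {n : ℕ} (A : Matrix (Fin n) (Fin n) ℝ) (a : Fin n → ℝ) :
    Continuous (objQ A a) := by
  unfold objQ; fun_prop

lemma aux_exists_min {n : ℕ} (A : Matrix (Fin n) (Fin n) ℝ) (a b : Fin n → ℝ) (c Δ : ℝ)
    (hslater : ∃ x : Fin n → ℝ, x ⬝ᵥ x < Δ ∧ b ⬝ᵥ x < c) :
    ∃ x, isOptimal A a b c Δ x := by
  obtain ⟨z, hz1, hz2⟩ := hslater
  obtain ⟨x, hx, hm⟩ := (aux_compact b c Δ).exists_isMinOn ⟨z, hz1.le, hz2.le⟩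
    (aux_objQ_cont A a).continuousOn
  exact ⟨x, hx.1, hx.2, fun y h1 h2 => hm ⟨h1, h2⟩⟩

lemma aux_pstar {n : ℕ} {A : Matrix (Fin n) (Fin n) ℝ} {a b : Fin n → ℝ} {c Δ : ℝ}
    {x : Fin n → ℝ} (hx : isOptimal A a b c Δ x) : pstar A a b c Δ = objQ A a x := by
  apply IsLeast.csInf_eq
  refine ⟨⟨x, hx.1, hx.2.1, rfl⟩, ?_⟩
  rintro v ⟨y, h1, h2, rfl⟩
  exact hx.2.2 y h1 h2

lemma aux_eig {n : ℕ} (hn : 1 ≤ n) (A : Matrix (Fin n) (Fin n) ℝ) (hA : A.IsHermitian)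
    (hnpd : ¬ A.PosDef) : ∃ l : ℝ, 0 ≤ l ∧
      (A + l • (1 : Matrix (Fin n) (Fin n) ℝ)).PosSemidef ∧
      ∃ v : Fin n → ℝ, v ≠ 0 ∧ (A + l • (1 : Matrix (Fin n) (Fin n) ℝ)).mulVec v = 0 := by
  have hc : IsCompact {x : Fin n → ℝ | x ⬝ᵥ x = 1} := by
    apply (aux_compact (0 : Fin n → ℝ) 0 1).of_isClosed_subset
    · exact isClosed_eq (by fun_prop) continuous_const
    · intro x hx
      exact ⟨le_of_eq hx, by simp⟩
  have hne : {x : Fin n → ℝ | x ⬝ᵥ x = 1}.Nonempty :=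
    ⟨Pi.single ⟨0, hn⟩ 1, by simp⟩
  obtain ⟨v, hv, hm⟩ := hc.exists_isMinOn hne (aux_objQ_cont A 0).continuousOn
  have hv : v ⬝ᵥ v = 1 := hv
  have hv0 : v ≠ 0 := by rintro rfl; simp at hv
  have key : ∀ x : Fin n → ℝ, (v ⬝ᵥ A.mulVec v) * (x ⬝ᵥ x) ≤ x ⬝ᵥ A.mulVec x := by
    intro x
    by_cases hx : x = 0
    · simp [hx]
    have hp := aux_self_pos hx
    have hs : √(x ⬝ᵥ x) ^ 2 = x ⬝ᵥ x := Real.sq_sqrt hp.le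
    have hs0 : 0 < √(x ⬝ᵥ x) := Real.sqrt_pos.2 hp
    have h1 : ((√(x ⬝ᵥ x))⁻¹ • x) ⬝ᵥ ((√(x ⬝ᵥ x))⁻¹ • x) = 1 := by
      simp only [smul_dotProduct, dotProduct_smul, smul_eq_mul]
      rw [← mul_assoc, ← sq, inv_pow, hs, inv_mul_cancel₀ hp.ne']
    have h2 := hm h1
    simp only [Set.mem_ofPred_eq, objQ, zero_dotProduct, mul_zero, sub_zero, mulVec_smul,
      smul_dotProduct, dotProduct_smul, smul_eq_mul] at h2
    rw [← mul_assoc, ← sq, inv_pow, hs, inv_mul_eq_div, le_div_iff₀ hp] at h2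
    exact h2
  have quad : ∀ (l : ℝ) (x : Fin n → ℝ), x ⬝ᵥ (A + l • (1 : Matrix (Fin n) (Fin n) ℝ)).mulVec x
      = x ⬝ᵥ A.mulVec x + l * (x ⬝ᵥ x) := by
    intro l x
    simp [add_mulVec, smul_mulVec]
  set m := v ⬝ᵥ A.mulVec v with hm'
  have hps : (A + (-m) • (1 : Matrix (Fin n) (Fin n) ℝ)).PosSemidef := by
    refine Matrix.PosSemidef.of_dotProduct_mulVec_nonneg ?_ ?_
    · exact hA.add (by simp [Matrix.IsHermitian])
    · intro x
      have := key x
      simp only [star_trivial, quad]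
      linarith
  refine ⟨-m, ?_, hps, v, hv0, ?_⟩
  · by_contra hlt
    apply hnpd
    refine Matrix.PosDef.of_dotProduct_mulVec_pos hA ?_
    intro x hx
    have h1 := key x
    have h2 := mul_pos (show 0 < m by linarith) (aux_self_pos hx)
    simp only [star_trivial]
    linarith
  · apply (hps.dotProduct_mulVec_zero_iff v).1
    simp only [star_trivial, quad]
    rw [hv]; linarith

lemma aux_objQ_shift {n : ℕ} (A : Matrix (Fin n) (Fin n) ℝ) (a b : Fin n → ℝ) (l μ : ℝ)
    (x : Fin n → ℝ) :
    objQ (A + l • (1 : Matrix (Fin n) (Fin n) ℝ)) (a - (μ / 2) • b) x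
      = objQ A a x + l * (x ⬝ᵥ x) + μ * (b ⬝ᵥ x) := by
  simp only [objQ, add_mulVec, smul_mulVec, one_mulVec, dotProduct_add, dotProduct_smul,
    sub_dotProduct, smul_dotProduct, smul_eq_mul]
  ring

lemma aux_convex {n : ℕ} {H : Matrix (Fin n) (Fin n) ℝ} (hH : H.PosSemidef)
    (w x y : Fin n → ℝ) (s t : ℝ) (hs : 0 ≤ s) (ht : 0 ≤ t) (hst : s + t = 1) :
    objQ H w (s • x + t • y) ≤ s * objQ H w x + t * objQ H w y := by
  have h := hH.dotProduct_mulVec_nonneg (x - y)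
  have h1 := aux_symm hH.1 x y
  have hn : 0 ≤ s * t * ((x - y) ⬝ᵥ H.mulVec (x - y)) := mul_nonneg (mul_nonneg hs ht) (by simpa using h)
  simp only [mulVec_sub, dotProduct_sub, sub_dotProduct] at hn
  simp only [objQ, mulVec_add, mulVec_smul, dotProduct_add, add_dotProduct, smul_dotProduct,
    dotProduct_smul, smul_eq_mul]
  rw [h1] at hn ⊢
  obtain rfl : t = 1 - s := by linarith
  linarith

lemma aux_duality {n : ℕ} {H : Matrix (Fin n) (Fin n) ℝ} (hH : H.PosSemidef)
    (w b : Fin n → ℝ) (c Δ : ℝ)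
    (hslater : ∃ x : Fin n → ℝ, x ⬝ᵥ x < Δ ∧ b ⬝ᵥ x < c) (g : ℝ)
    (hg : ∀ y : Fin n → ℝ, y ⬝ᵥ y ≤ Δ → b ⬝ᵥ y ≤ c → g ≤ objQ H w y) :
    ∃ α β : ℝ, 0 ≤ α ∧ 0 ≤ β ∧ ∀ y : Fin n → ℝ,
      g ≤ objQ H w y + α * (y ⬝ᵥ y - Δ) + β * (b ⬝ᵥ y - c) := by
  let S : Set (ℝ × ℝ × ℝ) := {p | ∃ y : Fin n → ℝ, y ⬝ᵥ y - Δ < p.1 ∧ b ⬝ᵥ y - c < p.2.1 ∧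
    objQ H w y - g < p.2.2}
  have hopen : IsOpen S := by
    have : S = ⋃ y : Fin n → ℝ, {p : ℝ × ℝ × ℝ | y ⬝ᵥ y - Δ < p.1 ∧ b ⬝ᵥ y - c < p.2.1 ∧
      objQ H w y - g < p.2.2} := by ext p; simp [S]
    rw [this]
    refine isOpen_iUnion fun y => ?_
    exact (isOpen_lt continuous_const continuous_fst).inter
      ((isOpen_lt continuous_const (continuous_fst.comp continuous_snd)).inter
        (isOpen_lt continuous_const (continuous_snd.comp continuous_snd)))
  have hconv : Convex ℝ S := by
    rw [convex_iff_forall_pos]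
    rintro p ⟨x, hx1, hx2, hx3⟩ q ⟨y, hy1, hy2, hy3⟩ s t hs ht hst
    refine ⟨s • x + t • y, ?_, ?_, ?_⟩
    · have h := aux_convex (Matrix.PosSemidef.one (R := ℝ) (n := Fin n)) 0 x y s t hs.le ht.le hst
      simp only [objQ, one_mulVec, zero_dotProduct, mul_zero, sub_zero] at h
      have e1 := mul_lt_mul_of_pos_left hx1 hs
      have e2 := mul_lt_mul_of_pos_left hy1 ht
      simp only [Prod.fst_add, Prod.smul_fst, smul_eq_mul]
      have : Δ = s * Δ + t * Δ := by rw [← add_mul, hst, one_mul]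
      linarith
    · have e1 := mul_lt_mul_of_pos_left hx2 hs
      have e2 := mul_lt_mul_of_pos_left hy2 ht
      simp only [Prod.fst_add, Prod.smul_fst, Prod.snd_add, Prod.smul_snd, smul_eq_mul,
        dotProduct_add, dotProduct_smul]
      have : c = s * c + t * c := by rw [← add_mul, hst, one_mul]
      linarith
    · have h := aux_convex hH w x y s t hs.le ht.le hst
      have e1 := mul_lt_mul_of_pos_left hx3 hs
      have e2 := mul_lt_mul_of_pos_left hy3 ht
      simp only [Prod.snd_add, Prod.smul_snd, smul_eq_mul]
      have : g = s * g + t * g := by rw [← add_mul, hst, one_mul]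
      linarith
  have h0 : (0 : ℝ × ℝ × ℝ) ∉ S := by
    rintro ⟨y, h1, h2, h3⟩
    simp only [Prod.fst_zero, Prod.snd_zero] at h1 h2 h3
    have := hg y (by linarith) (by linarith)
    linarith
  obtain ⟨f, hf⟩ := geometric_hahn_banach_open_point hconv hopen h0
  have hrep : ∀ p : ℝ × ℝ × ℝ, f p = p.1 * f (1, 0, 0) + p.2.1 * f (0, 1, 0) + p.2.2 * f (0, 0, 1) := by
    intro p
    have : p = p.1 • ((1, 0, 0) : ℝ × ℝ × ℝ) + p.2.1 • ((0, 1, 0) : ℝ × ℝ × ℝ)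
        + p.2.2 • ((0, 0, 1) : ℝ × ℝ × ℝ) := by
      ext <;> simp
    conv_lhs => rw [this]
    simp only [map_add, map_smul, smul_eq_mul]
  obtain ⟨α, hα⟩ : ∃ α, α = - f (1, 0, 0) := ⟨_, rfl⟩
  obtain ⟨β, hβ⟩ : ∃ β, β = - f (0, 1, 0) := ⟨_, rfl⟩
  obtain ⟨γ, hγ⟩ : ∃ γ, γ = - f (0, 0, 1) := ⟨_, rfl⟩
  have hpos : ∀ (y : Fin n → ℝ) (p q r : ℝ), 0 < p → 0 < q → 0 < r →
      0 < (y ⬝ᵥ y - Δ + p) * α + (b ⬝ᵥ y - c + q) * β + (objQ H w y - g + r) * γ := by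
    intro y p q r hp hq hr
    have h := hf (y ⬝ᵥ y - Δ + p, b ⬝ᵥ y - c + q, objQ H w y - g + r)
      ⟨y, by simpa using hp, by simpa using hq, by simpa using hr⟩
    rw [map_zero, hrep] at h
    simp only [hα, hβ, hγ]
    linarith
  -- nonnegativity of an increasing affine function at all large arguments
  have hlin : ∀ k e : ℝ, (∀ p : ℝ, 0 < p → 0 < k + p * e) → 0 ≤ e ∧ 0 ≤ k := by
    intro k e h
    constructor
    · by_contra hlt
      push Not at hlt
      have h1 := h (|k| / (-e) + 1) (by have : 0 < -e := by linarith
                                        positivity)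
      have h2 : |k| / (-e) * e = -|k| := by
        have he : e ≠ 0 := hlt.ne
        field_simp
      have h3 := le_abs_self k
      nlinarith
    · by_contra hlt
      push Not at hlt
      have h1 := h (-k / (2 * (|e| + 1))) (by have : 0 < -k := by linarith
                                              positivity)
      have h3 := le_abs_self e
      have h4 : -k / (2 * (|e| + 1)) * e ≤ -k / (2 * (|e| + 1)) * (|e| + 1) := by
        apply mul_le_mul_of_nonneg_left (by linarith)
        have : 0 < -k := by linarith
        positivity
      have h5 : -k / (2 * (|e| + 1)) * (|e| + 1) = -k / 2 := by field_simp
      linarith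
  have hα0 : 0 ≤ α := (hlin ((0 ⬝ᵥ (0 : Fin n → ℝ) - Δ) * α + (b ⬝ᵥ 0 - c + 1) * β
    + (objQ H w 0 - g + 1) * γ) α fun p hp => by
      have := hpos 0 p 1 1 hp one_pos one_pos; linarith).1
  have hβ0 : 0 ≤ β := (hlin ((0 ⬝ᵥ (0 : Fin n → ℝ) - Δ + 1) * α + (b ⬝ᵥ 0 - c) * β
    + (objQ H w 0 - g + 1) * γ) β fun p hp => by
      have := hpos 0 1 p 1 one_pos hp one_pos; linarith).1
  have hγ0 : 0 ≤ γ := (hlin ((0 ⬝ᵥ (0 : Fin n → ℝ) - Δ + 1) * α + (b ⬝ᵥ 0 - c + 1) * β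
    + (objQ H w 0 - g) * γ) γ fun p hp => by
      have := hpos 0 1 1 p one_pos one_pos hp; linarith).1
  have hall : ∀ y : Fin n → ℝ,
      0 ≤ (y ⬝ᵥ y - Δ) * α + (b ⬝ᵥ y - c) * β + (objQ H w y - g) * γ := by
    intro y
    refine (hlin _ (α + β + γ) fun p hp => ?_).2
    have := hpos y p p p hp hp hp
    linarith
  have hγp : 0 < γ := by
    rcases hγ0.lt_or_eq with h | h
    · exact h
    exfalso
    obtain ⟨z, hz1, hz2⟩ := hslater
    have := hpos z ((Δ - z ⬝ᵥ z) / 2) ((c - b ⬝ᵥ z) / 2) 1 (by linarith) (by linarith) one_pos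
    rw [← h] at this
    nlinarith
  refine ⟨α / γ, β / γ, by positivity, by positivity, fun y => ?_⟩
  have h := div_nonneg (hall y) hγp.le
  have e : ((y ⬝ᵥ y - Δ) * α + (b ⬝ᵥ y - c) * β + (objQ H w y - g) * γ) / γ =
    objQ H w y - g + α / γ * (y ⬝ᵥ y - Δ) + β / γ * (b ⬝ᵥ y - c) := by
    field_simp; ring
  linarith

lemma aux_forward {n : ℕ} (hn : 1 ≤ n) (A : Matrix (Fin n) (Fin n) ℝ) (hA : A.IsHermitian)
    (hnpd : ¬ A.PosDef) (a b : Fin n → ℝ) (c Δ : ℝ)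
    (hslater : ∃ x : Fin n → ℝ, x ⬝ᵥ x < Δ ∧ b ⬝ᵥ x < c)
    (hne : pstar A a b c Δ ≠ dstar A a b c Δ) :
      ∃ l μ : ℝ, 0 < l ∧ 0 < μ ∧
        (A + l • (1 : Matrix (Fin n) (Fin n) ℝ)).PosSemidef ∧
        (A + l • (1 : Matrix (Fin n) (Fin n) ℝ)).rank = n - 1 ∧
        ∃ x1 x2 : Fin n → ℝ,
          (A + l • (1 : Matrix (Fin n) (Fin n) ℝ)).mulVec x1 = a - (μ / 2) • b ∧
          (A + l • (1 : Matrix (Fin n) (Fin n) ℝ)).mulVec x2 = a - (μ / 2) • b ∧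
          x1 ⬝ᵥ x1 = Δ ∧ x2 ⬝ᵥ x2 = Δ ∧ (b ⬝ᵥ x1 - c) * (b ⬝ᵥ x2 - c) < 0 := by
  obtain ⟨l, hl, hH, v, hv, hHv⟩ := aux_eig hn A hA hnpd
  have hsh0 : ∀ x, objQ (A + l • (1 : Matrix (Fin n) (Fin n) ℝ)) a x
      = objQ A a x + l * (x ⬝ᵥ x) := by
    intro x
    have := aux_objQ_shift A a b l 0 x
    simpa using this
  have hsh := aux_objQ_shift A a b l
  set H := A + l • (1 : Matrix (Fin n) (Fin n) ℝ) with hHdef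
  obtain ⟨p, hp⟩ := aux_exists_min H a b c Δ hslater
  obtain ⟨o, ho⟩ := aux_exists_min A a b c Δ hslater
  obtain ⟨α, μ, hα, hμ, hd⟩ := aux_duality hH a b c Δ hslater _ hp.2.2
  have hp1 := hp.1
  have hp2 := hp.2.1
  -- the gap
  have key : ∀ x : Fin n → ℝ, x ⬝ᵥ x ≤ Δ → b ⬝ᵥ x ≤ c → l * (x ⬝ᵥ x - Δ) = 0 →
      objQ H a x = objQ H a p → False := by
    intro x h1 h2 h3 h4
    apply hne
    rw [aux_pstar ho]
    symm
    apply IsGreatest.csSup_eq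
    constructor
    · refine ⟨l + α, μ, by positivity, hμ, fun y => ?_⟩
      have e1 := ho.2.2 x h1 h2
      have e2 := hd y
      have e3 := hsh0 x
      have e4 := hsh0 y
      unfold lagr
      linarith
    · rintro w ⟨l1, l2, hl1, hl2, hw⟩
      have e := hw o
      unfold lagr at e
      have e1 := mul_nonneg hl1 (sub_nonneg.2 ho.1)
      have e2 := mul_nonneg hl2 (sub_nonneg.2 ho.2.1)
      linarith
  have hlpos : 0 < l := by
    rcases hl.lt_or_eq with h | h
    · exact h
    · exact (key p hp1 hp2 (by simp [← h]) rfl).elim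
  have hplt : p ⬝ᵥ p < Δ := by
    rcases hp1.lt_or_eq with h | h
    · exact h
    · exact (key p hp1 hp2 (by simp [h]) rfl).elim
  have hdp := hd p
  have hs1 := mul_nonneg hα (sub_nonneg.2 hp1)
  have hs2 := mul_nonneg hμ (sub_nonneg.2 hp2)
  have hα0 : α = 0 := by
    have : α * (Δ - p ⬝ᵥ p) = 0 := by linarith
    rcases mul_eq_zero.1 this with h | h
    · exact h
    · linarith
  have hcs : μ * (b ⬝ᵥ p - c) = 0 := by linarith
  have hfo : H.mulVec p = a - (μ / 2) • b := by
    apply aux_first_order hH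
    intro y
    have e := hd y
    rw [hα0] at e
    have e1 := hsh μ p
    have e2 := hsh μ y
    have e3 := hsh0 p
    have e4 := hsh0 y
    linarith
  -- directions in the kernel
  have hker : ∀ u : Fin n → ℝ, u ≠ 0 → H.mulVec u = 0 → b ⬝ᵥ u ≤ 0 → μ * (b ⬝ᵥ u) = 0 → False := by
    intro u hu hHu hbu hmu
    obtain ⟨t, ht, hroot⟩ := aux_root p u Δ hplt hu
    refine key (p + t • u) hroot.le ?_ (by rw [hroot]; ring) ?_
    · simp only [dotProduct_add, dotProduct_smul, smul_eq_mul]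
      have := mul_nonneg ht.le (neg_nonneg.2 hbu)
      linarith
    · rw [aux_expand hH.1, hHu, hfo]
      have : u ⬝ᵥ (a - (μ / 2) • b - a) = - (μ * (b ⬝ᵥ u)) / 2 := by
        simp only [dotProduct_sub, dotProduct_smul, smul_eq_mul]
        rw [dotProduct_comm u b]; ring
      rw [this, hmu]; simp
  have hker0 : ∀ u : Fin n → ℝ, H.mulVec u = 0 → b ⬝ᵥ u = 0 → u = 0 := by
    intro u h1 h2
    by_contra hu
    exact hker u hu h1 h2.le (by simp [h2])
  have hbv : b ⬝ᵥ v ≠ 0 := fun h => hv (hker0 v hHv h)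
  have hμpos : 0 < μ := by
    rcases hμ.lt_or_eq with h | h
    · exact h
    exfalso
    rcases le_total (b ⬝ᵥ v) 0 with h' | h'
    · exact hker v hv hHv h' (by simp [← h])
    · exact hker (-v) (neg_ne_zero.2 hv) (by rw [mulVec_neg, hHv, neg_zero])
        (by rw [dotProduct_neg]; linarith) (by simp [← h])
  have hbp : b ⬝ᵥ p = c := by
    rcases mul_eq_zero.1 hcs with h | h <;> linarith
  have hrank : H.rank = n - 1 := by
    have h1 : Module.finrank ℝ (LinearMap.ker H.mulVecLin) = 1 := by
      have hvk : v ∈ LinearMap.ker H.mulVecLin := by simpa using hHv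
      refine (finrank_eq_one_iff_of_nonzero' (⟨v, hvk⟩ : LinearMap.ker H.mulVecLin) ?_).2 ?_
      · intro h; exact hv (congrArg Subtype.val h)
      · rintro ⟨u, hu⟩
        have hu' : H.mulVec u = 0 := by simpa using hu
        refine ⟨(b ⬝ᵥ u) / (b ⬝ᵥ v), Subtype.ext ?_⟩
        have := hker0 (u - ((b ⬝ᵥ u) / (b ⬝ᵥ v)) • v)
          (by rw [mulVec_sub, mulVec_smul, hHv, hu']; simp)
          (by rw [dotProduct_sub, dotProduct_smul, smul_eq_mul, div_mul_cancel₀ _ hbv, sub_self])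
        exact (sub_eq_zero.1 this).symm
    have h2 := LinearMap.finrank_range_add_finrank_ker H.mulVecLin
    rw [h1, Module.finrank_fin_fun] at h2
    unfold Matrix.rank
    omega
  obtain ⟨t1, ht1, hr1⟩ := aux_root p v Δ hplt hv
  obtain ⟨t2, ht2, hr2⟩ := aux_root p (-v) Δ hplt (neg_ne_zero.2 hv)
  refine ⟨l, μ, hlpos, hμpos, hH, hrank, p + t1 • v, p + t2 • (-v), ?_, ?_, hr1, hr2, ?_⟩
  · rw [mulVec_add, mulVec_smul, hHv, hfo]; simp
  · rw [mulVec_add, mulVec_smul, mulVec_neg, hHv, hfo]; simp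
  · simp only [dotProduct_add, dotProduct_smul, smul_eq_mul, dotProduct_neg, hbp]
    have h1 : 0 < (b ⬝ᵥ v) ^ 2 := by positivity
    have h2 := mul_pos (mul_pos ht1 ht2) h1
    linarith

lemma aux_backward {n : ℕ} (hn : 1 ≤ n) (A : Matrix (Fin n) (Fin n) ℝ)
    (a b : Fin n → ℝ) (c Δ : ℝ)
    (hslater : ∃ x : Fin n → ℝ, x ⬝ᵥ x < Δ ∧ b ⬝ᵥ x < c)
    (l μ : ℝ) (hl : 0 < l) (hμ : 0 < μ)
    (hH : (A + l • (1 : Matrix (Fin n) (Fin n) ℝ)).PosSemidef)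
    (hrank : (A + l • (1 : Matrix (Fin n) (Fin n) ℝ)).rank = n - 1)
    (x1 x2 : Fin n → ℝ)
    (h1 : (A + l • (1 : Matrix (Fin n) (Fin n) ℝ)).mulVec x1 = a - (μ / 2) • b)
    (h2 : (A + l • (1 : Matrix (Fin n) (Fin n) ℝ)).mulVec x2 = a - (μ / 2) • b)
    (hx1 : x1 ⬝ᵥ x1 = Δ) (hx2 : x2 ⬝ᵥ x2 = Δ) (hlt : (b ⬝ᵥ x1 - c) * (b ⬝ᵥ x2 - c) < 0) :
    pstar A a b c Δ ≠ dstar A a b c Δ := by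
  have hsh := aux_objQ_shift A a b l μ
  set H := A + l • (1 : Matrix (Fin n) (Fin n) ℝ) with hHdef
  obtain ⟨o, ho⟩ := aux_exists_min A a b c Δ hslater
  have hmin : ∀ y, objQ H (a - (μ / 2) • b) x1 ≤ objQ H (a - (μ / 2) • b) y := by
    intro y
    rw [aux_min hH.1 _ x1 y h1]
    have : 0 ≤ (y - x1) ⬝ᵥ H.mulVec (y - x1) := by
      simpa using hH.dotProduct_mulVec_nonneg (y - x1)
    linarith
  have heq : objQ H (a - (μ / 2) • b) x2 = objQ H (a - (μ / 2) • b) x1 := by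
    rw [aux_min hH.1 _ x1 x2 h1, mulVec_sub, h1, h2]; simp
  set q := objQ H (a - (μ / 2) • b) x1 - l * Δ - μ * c with hq
  have hdstar : dstar A a b c Δ = q := by
    apply IsGreatest.csSup_eq
    constructor
    · refine ⟨l, μ, hl.le, hμ.le, fun y => ?_⟩
      have e1 := hmin y
      have e2 := hsh y
      unfold lagr
      linarith
    · rintro w ⟨l1, l2, hl1, hl2, hw⟩
      have e1 := hw x1
      have e2 := hw x2
      unfold lagr at e1 e2
      have s1 := hsh x1
      have s2 := hsh x2
      rw [hx1] at e1 s1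
      rw [hx2] at e2 s2
      set y1 := b ⬝ᵥ x1 - c with hy1
      set y2 := b ⬝ᵥ x2 - c with hy2
      have f1 : w ≤ q + (l2 - μ) * y1 := by rw [hq, hy1]; linarith
      have f2 : w ≤ q + (l2 - μ) * y2 := by rw [hq, hy2]; linarith
      by_contra hcon
      push Not at hcon
      have g1 : 0 < (l2 - μ) * y1 := by linarith
      have g2 : 0 < (l2 - μ) * y2 := by linarith
      have g3 := mul_pos g1 g2
      have g4 := mul_nonneg (sq_nonneg (l2 - μ)) (neg_nonneg.2 hlt.le)
      linarith
  rw [hdstar, aux_pstar ho]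
  intro hcon
  have so := hsh o
  have mo := hmin o
  have e1 := mul_nonneg hl.le (sub_nonneg.2 ho.1)
  have e2 := mul_nonneg hμ.le (sub_nonneg.2 ho.2.1)
  have hb : b ⬝ᵥ o = c := by
    have : μ * (c - b ⬝ᵥ o) = 0 := by linarith
    rcases mul_eq_zero.1 this with h | h <;> linarith
  have hoo : o ⬝ᵥ o = Δ := by
    have : l * (Δ - o ⬝ᵥ o) = 0 := by linarith
    rcases mul_eq_zero.1 this with h | h <;> linarith
  have hHo : H.mulVec o = a - (μ / 2) • b := by
    apply aux_first_order hH
    intro y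
    have := hmin y
    linarith
  have h12 : x2 - x1 ≠ 0 := by
    intro h
    rw [sub_eq_zero.1 h] at hlt
    nlinarith
  have hker : Module.finrank ℝ (LinearMap.ker H.mulVecLin) = 1 := by
    have h2 := LinearMap.finrank_range_add_finrank_ker H.mulVecLin
    rw [Module.finrank_fin_fun] at h2
    unfold Matrix.rank at hrank
    omega
  have hm : x2 - x1 ∈ LinearMap.ker H.mulVecLin := by
    simp [mulVec_sub, h1, h2]
  have hmo : o - x1 ∈ LinearMap.ker H.mulVecLin := by
    simp [mulVec_sub, h1, hHo]
  obtain ⟨t, ht⟩ := (finrank_eq_one_iff_of_nonzero' (⟨x2 - x1, hm⟩ : LinearMap.ker H.mulVecLin)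
    (fun h => h12 (congrArg Subtype.val h))).1 hker ⟨o - x1, hmo⟩
  have ht : t • (x2 - x1) = o - x1 := congrArg Subtype.val ht
  obtain rfl : o = x1 + t • (x2 - x1) := by rw [ht]; abel
  have hP := aux_self_pos h12
  simp only [dotProduct_add, add_dotProduct, smul_dotProduct, dotProduct_smul, smul_eq_mul,
    dotProduct_sub, sub_dotProduct, dotProduct_comm x2 x1, hx1, hx2] at hoo hP hb
  have hz : t * (t - 1) * (Δ - x1 ⬝ᵥ x2 - (x1 ⬝ᵥ x2 - Δ)) = 0 := by linarith
  rcases mul_eq_zero.1 hz with h | h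
  · rcases mul_eq_zero.1 h with h | h
    · rw [h] at hb
      have : b ⬝ᵥ x1 - c = 0 := by linarith
      rw [this] at hlt; simp at hlt
    · have ht1 : t = 1 := by linarith
      rw [ht1] at hb
      have : b ⬝ᵥ x2 - c = 0 := by linarith
      rw [this] at hlt; simp at hlt
  · linarith

/-- Theorem 3 (Ai–Zhang), necessary and sufficient condition for
failure of strong duality for eTRS. -/
theorem stmt4 {n : ℕ} (hn : 1 ≤ n) (A : Matrix (Fin n) (Fin n) ℝ) (hA : A.IsHermitian)
    (hnpd : ¬ A.PosDef) (a b : Fin n → ℝ) (c Δ : ℝ) (hΔ : 0 < Δ)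
    (hslater : ∃ x : Fin n → ℝ, x ⬝ᵥ x < Δ ∧ b ⬝ᵥ x < c) :
    pstar A a b c Δ ≠ dstar A a b c Δ ↔
      ∃ l μ : ℝ, 0 < l ∧ 0 < μ ∧
        (A + l • (1 : Matrix (Fin n) (Fin n) ℝ)).PosSemidef ∧
        (A + l • (1 : Matrix (Fin n) (Fin n) ℝ)).rank = n - 1 ∧
        ∃ x1 x2 : Fin n → ℝ,
          (A + l • (1 : Matrix (Fin n) (Fin n) ℝ)).mulVec x1 = a - (μ / 2) • b ∧
          (A + l • (1 : Matrix (Fin n) (Fin n) ℝ)).mulVec x2 = a - (μ / 2) • b ∧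
          x1 ⬝ᵥ x1 = Δ ∧ x2 ⬝ᵥ x2 = Δ ∧ (b ⬝ᵥ x1 - c) * (b ⬝ᵥ x2 - c) < 0 := by
  constructor
  · exact aux_forward hn A hA hnpd a b c Δ hslater
  · rintro ⟨l, μ, hl, hμ, hH, hr, x1, x2, h1, h2, h3, h4, h5⟩
    exact aux_backward hn A a b c Δ hslater l μ hl hμ hH hr x1 x2 h1 h2 h3 h4 h5
end

section
/- (Eigenvalue reformulation of the Lagrangian dual of eTRS) Since A is not positive definite, the Lagrangian dual value of eTRS satisfies d* = sup over t ∈ ℝ and λ ≥ 0 of k(t,λ) := (Δ + 1)·λmin(D(t,λ)) − t − λc; moreover the constraint λmin(D(t,λ)) ≤ 0 is automatically satisfied (λmin(D(t,λ)) ≤ λmin(A) ≤ 0 for all t, λ). -/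
open Matrix

lemma eigSet_finite {ι : Type} [Fintype ι] [DecidableEq ι] (M : Matrix ι ι ℝ) :
    {μ : ℝ | ∃ v : ι → ℝ, v ≠ 0 ∧ M.mulVec v = μ • v}.Finite := by
  refine (Module.End.finite_hasEigenvalue (Matrix.toLin' M)).subset ?_
  rintro μ ⟨v, hv, h⟩
  exact Module.End.hasEigenvalue_of_hasEigenvector
    (x := v) ⟨Module.End.mem_eigenspace_iff.2 (by simpa using h), hv⟩

lemma exists_eig {ι : Type} [Fintype ι] [DecidableEq ι] (M : Matrix ι ι ℝ)
    (hM : M.IsHermitian) (i : ι) :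
    ∃ v : ι → ℝ, v ≠ 0 ∧ M.mulVec v = hM.eigenvalues i • v := by
  refine ⟨(hM.eigenvectorBasis i).ofLp, ?_, hM.mulVec_eigenvectorBasis i⟩
  intro h
  apply hM.eigenvectorBasis.orthonormal.ne_zero i
  ext j
  exact congrFun h j

lemma lambdaMin_mem {ι : Type} [Fintype ι] [DecidableEq ι] [Nonempty ι] (M : Matrix ι ι ℝ)
    (hM : M.IsHermitian) : ∃ v : ι → ℝ, v ≠ 0 ∧ M.mulVec v = lambdaMin M • v := by
  obtain ⟨i⟩ := ‹Nonempty ι›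
  exact Set.Nonempty.csInf_mem (s := {μ : ℝ | ∃ v : ι → ℝ, v ≠ 0 ∧ M.mulVec v = μ • v})
    ⟨_, exists_eig M hM i⟩ (eigSet_finite M)

lemma lambdaMin_le {ι : Type} [Fintype ι] [DecidableEq ι] (M : Matrix ι ι ℝ)
    (hM : M.IsHermitian) (y : ι → ℝ) : lambdaMin M * (y ⬝ᵥ y) ≤ y ⬝ᵥ M.mulVec y := by
  have hH : (M - lambdaMin M • (1 : Matrix ι ι ℝ)).IsHermitian := by
    refine hM.sub ?_
    simp [Matrix.IsHermitian, Matrix.conjTranspose_smul]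
  have hP : (M - lambdaMin M • (1 : Matrix ι ι ℝ)).PosSemidef := by
    rw [hH.posSemidef_iff_eigenvalues_nonneg]
    intro i
    obtain ⟨v, hv, h⟩ := exists_eig _ hH i
    rw [Matrix.sub_mulVec, Matrix.smul_mulVec, Matrix.one_mulVec, sub_eq_iff_eq_add,
      ← add_smul] at h
    have : lambdaMin M ≤ hH.eigenvalues i + lambdaMin M :=
      csInf_le (eigSet_finite M).bddBelow ⟨v, hv, h⟩
    simpa using this
  have := hP.dotProduct_mulVec_nonneg y
  simp only [Matrix.sub_mulVec, Matrix.smul_mulVec, Matrix.one_mulVec, dotProduct_sub,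
    dotProduct_smul, star_trivial, smul_eq_mul] at this
  linarith

lemma dot_self_pos {ι : Type} [Fintype ι] {v : ι → ℝ} (hv : v ≠ 0) : 0 < v ⬝ᵥ v := by
  have h0 : 0 ≤ v ⬝ᵥ v := Finset.sum_nonneg fun i _ => mul_self_nonneg _
  exact lt_of_le_of_ne h0 fun h => hv (dotProduct_self_eq_zero.1 h.symm)

lemma le_lambdaMin {ι : Type} [Fintype ι] [DecidableEq ι] [Nonempty ι] (M : Matrix ι ι ℝ)
    (hM : M.IsHermitian) (m : ℝ) (h : ∀ y : ι → ℝ, m * (y ⬝ᵥ y) ≤ y ⬝ᵥ M.mulVec y) :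
    m ≤ lambdaMin M := by
  obtain ⟨v, hv, hMv⟩ := lambdaMin_mem M hM
  have h1 := h v
  rw [hMv, dotProduct_smul, smul_eq_mul] at h1
  exact le_of_mul_le_mul_right h1 (dot_self_pos hv)

lemma borderD2_herm {n : ℕ} (A : Matrix (Fin n) (Fin n) ℝ) (hA : A.IsHermitian)
    (a b : Fin n → ℝ) (t l : ℝ) : (borderD2 A a b t l).IsHermitian := by
  unfold borderD2 borderD
  rw [Matrix.isHermitian_fromBlocks_iff]
  refine ⟨?_, ?_, ?_, hA⟩ <;> ext <;> simp

lemma borderD2_quad {n : ℕ} (A : Matrix (Fin n) (Fin n) ℝ)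
    (a b : Fin n → ℝ) (t l s : ℝ) (x : Fin n → ℝ) :
    (Sum.elim (fun _ : Unit => s) x) ⬝ᵥ (borderD2 A a b t l).mulVec (Sum.elim (fun _ => s) x)
      = t * s ^ 2 + s * (-2 * (a ⬝ᵥ x) + l * (b ⬝ᵥ x)) + x ⬝ᵥ A.mulVec x := by
  unfold borderD2 borderD
  rw [Matrix.fromBlocks_mulVec]
  have e1 : (fun j => a j - l / 2 * b j) ⬝ᵥ x = a ⬝ᵥ x - l / 2 * (b ⬝ᵥ x) := by
    simp only [dotProduct, sub_mul, Finset.sum_sub_distrib, Finset.mul_sum, mul_assoc]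
  have e2 : ((Matrix.of fun (_ : Unit) (j : Fin n) => -(a j - l / 2 * b j)).mulVec x)
      = fun _ => -(a ⬝ᵥ x - l / 2 * (b ⬝ᵥ x)) := by
    ext
    rw [← e1, ← neg_dotProduct]
    rfl
  have e3 : ((Matrix.of fun (i : Fin n) (_ : Unit) => -(a i - l / 2 * b i)).mulVec
      (fun _ => s)) = (-s) • (fun j => a j - l / 2 * b j) := by
    ext i
    simp [Matrix.mulVec, dotProduct]
    ring
  have e4 : ((Matrix.of fun (_ : Unit) (_ : Unit) => t).mulVec (fun _ => s))
      = fun _ => t * s := by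
    ext; simp [Matrix.mulVec, dotProduct]
  have e5 : ∀ p q : ℝ, (fun _ : Unit => p) ⬝ᵥ (fun _ : Unit => q) = p * q := by
    intro p q; simp [dotProduct]
  simp only [Sum.elim_comp_inl, Sum.elim_comp_inr, e2, e3, e4]
  rw [sumElim_dotProduct_sumElim, dotProduct_add, dotProduct_add, dotProduct_smul,
    dotProduct_comm x (fun j => a j - l / 2 * b j), e1, e5, e5, smul_eq_mul]
  ring

lemma elim_dot {n : ℕ} (s : ℝ) (x : Fin n → ℝ) :
    (Sum.elim (fun _ : Unit => s) x) ⬝ᵥ (Sum.elim (fun _ : Unit => s) x) = s ^ 2 + x ⬝ᵥ x := by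
  rw [sumElim_dotProduct_sumElim]
  simp [dotProduct, sq]

/-- a quadratic bounded below has nonnegative leading coefficient -/
lemma lead_nonneg (q p m : ℝ) (h : ∀ r : ℝ, m ≤ q * r ^ 2 + p * r) : 0 ≤ q := by
  by_contra hq
  push Not at hq
  have hq0 : q ≠ 0 := hq.ne
  obtain ⟨R, hR⟩ : ∃ R : ℝ, q * R ^ 2 = m - 1 - |m| := by
    refine ⟨Real.sqrt ((m - 1 - |m|) / q), ?_⟩
    rw [Real.sq_sqrt (div_nonneg_of_nonpos (by linarith [le_abs_self m]) hq.le)]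
    field_simp
  have ha := h R
  have hb := h (-R)
  have h3 := abs_nonneg m
  have h4 : q * (-R) ^ 2 = q * R ^ 2 := by ring
  rw [h4] at hb
  linarith

/-- The eigenvalue reformulation of the Lagrangian dual of eTRS,
and redundancy of the constraint λmin(D(t,λ)) ≤ 0. -/
theorem stmt6 {n : ℕ} (hn : 1 ≤ n) (A : Matrix (Fin n) (Fin n) ℝ) (hA : A.IsHermitian)
    (hnpd : ¬ A.PosDef) (a b : Fin n → ℝ) (c Δ : ℝ) (hΔ : 0 < Δ) :
    (∀ t l : ℝ, lambdaMin (borderD2 A a b t l) ≤ lambdaMin A ∧ lambdaMin A ≤ 0) ∧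
    dstar A a b c Δ = sSup {v : ℝ | ∃ t l : ℝ, 0 ≤ l ∧ v = ktl A a b c Δ t l} := by
  haveI : Nonempty (Fin n) := ⟨⟨0, hn⟩⟩
  have h1 : ∀ t l : ℝ, lambdaMin (borderD2 A a b t l) ≤ lambdaMin A := by
    intro t l
    apply le_lambdaMin A hA
    intro y
    have := lambdaMin_le _ (borderD2_herm A hA a b t l) (Sum.elim (fun _ => 0) y)
    rw [borderD2_quad, elim_dot] at this
    simpa using this
  have h2 : lambdaMin A ≤ 0 := by
    by_contra hpos
    push Not at hpos
    apply hnpd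
    refine Matrix.PosDef.of_dotProduct_mulVec_pos hA fun x hx => ?_
    have := lambdaMin_le A hA x
    have h3 := mul_pos hpos (dot_self_pos hx)
    simpa using h3.trans_le this
  refine ⟨fun t l => ⟨h1 t l, h2⟩, ?_⟩
  unfold dstar
  set S1 := {v : ℝ | ∃ l1 l2 : ℝ, 0 ≤ l1 ∧ 0 ≤ l2 ∧
    ∀ x : Fin n → ℝ, v ≤ lagr A a b c Δ x l1 l2} with hS1
  set S2 := {v : ℝ | ∃ t l : ℝ, 0 ≤ l ∧ v = ktl A a b c Δ t l} with hS2
  have hsub : S2 ⊆ S1 := by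
    rintro v ⟨t, l, hl, rfl⟩
    refine ⟨-lambdaMin (borderD2 A a b t l), l, by linarith [h1 t l], hl, fun x => ?_⟩
    have := lambdaMin_le _ (borderD2_herm A hA a b t l) (Sum.elim (fun _ => 1) x)
    rw [borderD2_quad, elim_dot] at this
    unfold ktl lagr objQ
    linarith
  have hdom : ∀ v ∈ S1, ∃ w ∈ S2, v ≤ w := by
    rintro v ⟨l1, l2, hl1, hl2, hv⟩
    refine ⟨_, ⟨-l1 - v - l1 * Δ - l2 * c, l2, hl2, rfl⟩, ?_⟩
    have key : -l1 ≤ lambdaMin (borderD2 A a b (-l1 - v - l1 * Δ - l2 * c) l2) := by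
      apply le_lambdaMin _ (borderD2_herm A hA a b _ _)
      intro y
      obtain ⟨s, x, rfl⟩ : ∃ (s : ℝ) (x : Fin n → ℝ), y = Sum.elim (fun _ : Unit => s) x :=
        ⟨y (Sum.inl ()), y ∘ Sum.inr, by ext (i | i) <;> rfl⟩
      rw [borderD2_quad, elim_dot]
      have hr : ∀ r : ℝ, v ≤ r ^ 2 * (x ⬝ᵥ A.mulVec x) - 2 * (r * (a ⬝ᵥ x))
          + l1 * (r ^ 2 * (x ⬝ᵥ x) - Δ) + l2 * (r * (b ⬝ᵥ x) - c) := by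
        intro r
        have := hv (r • x)
        unfold lagr objQ at this
        simp only [Matrix.mulVec_smul, dotProduct_smul, smul_dotProduct, smul_eq_mul] at this
        linarith
      by_cases hs : s = 0
      · subst hs
        have := lead_nonneg (x ⬝ᵥ A.mulVec x + l1 * (x ⬝ᵥ x))
          (-2 * (a ⬝ᵥ x) + l2 * (b ⬝ᵥ x)) (v + l1 * Δ + l2 * c)
          (fun r => by linarith [hr r])
        linarith
      · have h3 := mul_le_mul_of_nonneg_left (hr s⁻¹) (sq_nonneg s)
        have e : s * s⁻¹ = 1 := mul_inv_cancel₀ hs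
        have h4 : s ^ 2 * (s⁻¹ ^ 2 * (x ⬝ᵥ A.mulVec x) - 2 * (s⁻¹ * (a ⬝ᵥ x))
          + l1 * (s⁻¹ ^ 2 * (x ⬝ᵥ x) - Δ) + l2 * (s⁻¹ * (b ⬝ᵥ x) - c)) =
          x ⬝ᵥ A.mulVec x - 2 * s * (a ⬝ᵥ x) + l1 * (x ⬝ᵥ x) - s ^ 2 * l1 * Δ
            + s * l2 * (b ⬝ᵥ x) - s ^ 2 * l2 * c := by
          field_simp
          ring
        rw [h4] at h3
        linarith
    unfold ktl
    have := mul_le_mul_of_nonneg_left key (by linarith : 0 ≤ Δ + 1)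
    linarith
  have hne2 : S2.Nonempty := ⟨_, 0, 0, le_rfl, rfl⟩
  by_cases hb : BddAbove S1
  · refine le_antisymm (csSup_le (hne2.mono hsub) fun v hv => ?_) (csSup_le_csSup hb hne2 hsub)
    obtain ⟨w, hw, hvw⟩ := hdom v hv
    exact hvw.trans (le_csSup (hb.mono hsub) hw)
  · have hb2 : ¬ BddAbove S2 := by
      rintro ⟨B, hB⟩
      refine hb ⟨B, fun v hv => ?_⟩
      obtain ⟨w, hw, hvw⟩ := hdom v hv
      exact hvw.trans (hB hw)
    rw [Real.sSup_of_not_bddAbove hb, Real.sSup_of_not_bddAbove hb2]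
end

section
/- (Tightness of the eigenvalue dual with respect to the SDO relaxation) Suppose eTRS satisfies the Slater condition. Define the SDO relaxation value d_r* := inf{ M0•X : X an (n+1)×(n+1) real symmetric positive semidefinite matrix, M1•X ≤ Δ, M2•X ≤ c, M3•X = 1 }, where M0 = [[0, −aᵀ],[−a, A]], M1 = [[0, 0],[0, I_n]], M2 = [[0, bᵀ/2],[b/2, 0]], M3 = [[1, 0],[0, 0]], and • denotes the trace inner product. Then d* = d_r*, and moreover both the supremum defining d* (over t ∈ ℝ, λ ≥ 0 of (Δ+1)λmin(D(t,λ)) − t − λc) and the infimum defining d_r* are attained. -/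
open Matrix

/-- The data matrices of the SDO relaxation of eTRS. -/
noncomputable def sdoM1 (n : ℕ) : Matrix (Unit ⊕ Fin n) (Unit ⊕ Fin n) ℝ :=
  Matrix.fromBlocks 0 0 0 1

noncomputable def sdoM2 {n : ℕ} (b : Fin n → ℝ) : Matrix (Unit ⊕ Fin n) (Unit ⊕ Fin n) ℝ :=
  Matrix.fromBlocks 0 (Matrix.of fun (_ : Unit) (j : Fin n) => b j / 2)
    (Matrix.of fun (i : Fin n) (_ : Unit) => b i / 2) 0

noncomputable def sdoM3 (n : ℕ) : Matrix (Unit ⊕ Fin n) (Unit ⊕ Fin n) ℝ :=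
  Matrix.fromBlocks 1 0 0 0

/-- The optimal value of the SDO relaxation of eTRS (M0 = borderD A a 0 = [[0,-aᵀ],[-a,A]],
and M•X is the trace inner product). -/
noncomputable def drstar {n : ℕ} (A : Matrix (Fin n) (Fin n) ℝ) (a b : Fin n → ℝ)
    (c Δ : ℝ) : ℝ :=
  sInf {v : ℝ | ∃ X : Matrix (Unit ⊕ Fin n) (Unit ⊕ Fin n) ℝ, X.PosSemidef ∧
    (sdoM1 n * X).trace ≤ Δ ∧ (sdoM2 b * X).trace ≤ c ∧
    (sdoM3 n * X).trace = 1 ∧ v = (borderD A a 0 * X).trace}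


theorem ip_nonneg {ι : Type} [Fintype ι] [DecidableEq ι] {S X : Matrix ι ι ℝ}
    (hS : S.PosSemidef) (hX : X.PosSemidef) : 0 ≤ (S * X).trace := by
  have h := (hS.hadamard hX).dotProduct_mulVec_nonneg (fun _ => 1)
  have h2 : star (fun _ => (1:ℝ)) ⬝ᵥ ((S ⊙ X) *ᵥ fun _ : ι => (1:ℝ)) = (S * X).trace := by
    simp only [dotProduct, mulVec, Matrix.trace, Matrix.mul_apply, Matrix.diag, hadamard_apply,
      Pi.star_apply, star_trivial, mul_one, one_mul]
    refine Finset.sum_congr rfl fun i _ => Finset.sum_congr rfl fun j _ => ?_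
    have := hX.1.apply i j
    simp only [star_trivial] at this
    rw [this]
  rwa [h2] at h

theorem lamMin_spec {ι : Type} [Fintype ι] [DecidableEq ι] [Nonempty ι] {M : Matrix ι ι ℝ}
    (hM : M.IsHermitian) :
    (∃ v : ι → ℝ, v ≠ 0 ∧ M.mulVec v = lambdaMin M • v) ∧
    (M - lambdaMin M • (1 : Matrix ι ι ℝ)).PosSemidef := by
  set S := {μ : ℝ | ∃ v : ι → ℝ, v ≠ 0 ∧ M.mulVec v = μ • v} with hS
  have hev : ∀ (N : Matrix ι ι ℝ) (hN : N.IsHermitian) (i : ι), ∃ v : ι → ℝ, v ≠ 0 ∧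
      N.mulVec v = hN.eigenvalues i • v := by
    intro N hN i
    refine ⟨_, ?_, hN.mulVec_eigenvectorBasis i⟩
    intro h
    have h1 := (hN.eigenvectorBasis).orthonormal.1 i
    have h2 : hN.eigenvectorBasis i = 0 := by
      ext j; exact congrFun h j
    rw [h2] at h1
    simp at h1
  have hfin : S.Finite := by
    refine (Module.End.finite_hasEigenvalue (Matrix.toLin' M)).subset ?_
    rintro μ ⟨v, hv, h⟩
    exact Module.End.hasEigenvalue_of_hasEigenvector
      (Module.End.hasEigenvector_iff.2 ⟨Module.End.mem_eigenspace_iff.2 (by simpa using h), hv⟩)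
  have hne : S.Nonempty := ⟨_, hev M hM (Classical.arbitrary ι)⟩
  have hmem : lambdaMin M ∈ S := hne.csInf_mem hfin
  refine ⟨hmem, ?_⟩
  have hH : (M - lambdaMin M • (1 : Matrix ι ι ℝ)).IsHermitian := by
    refine hM.sub ?_
    ext i j
    simp [Matrix.one_apply, eq_comm]
  rw [hH.posSemidef_iff_eigenvalues_nonneg]
  intro i
  obtain ⟨v, hv, h⟩ := hev _ hH i
  have : hH.eigenvalues i + lambdaMin M ∈ S := by
    refine ⟨v, hv, ?_⟩
    rw [Matrix.sub_mulVec, Matrix.smul_mulVec, Matrix.one_mulVec] at h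
    rw [add_smul, ← h]; simp
  have := csInf_le hfin.bddBelow this
  change lambdaMin M ≤ _ at this
  simp only [Pi.zero_apply]
  linarith

/-- lifted vector -/
def lft {n : ℕ} (s : ℝ) (x : Fin n → ℝ) : Unit ⊕ Fin n → ℝ := Sum.elim (fun _ => s) x

theorem lft_psd {n : ℕ} (s : ℝ) (x : Fin n → ℝ) : (vecMulVec (lft s x) (lft s x)).PosSemidef := by
  simpa using posSemidef_vecMulVec_self_star (lft s x)

theorem ip_vec {ι : Type} [Fintype ι] (M : Matrix ι ι ℝ) (v : ι → ℝ) :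
    (M * vecMulVec v v).trace = v ⬝ᵥ M *ᵥ v := by
  rw [Matrix.mul_vecMulVec, Matrix.trace_vecMulVec, dotProduct_comm]

theorem q_border {n : ℕ} (A : Matrix (Fin n) (Fin n) ℝ) (a : Fin n → ℝ) (t s : ℝ) (x : Fin n → ℝ) :
    lft s x ⬝ᵥ (borderD A a t) *ᵥ lft s x = t * s^2 - 2 * s * (a ⬝ᵥ x) + x ⬝ᵥ A *ᵥ x := by
  simp only [lft, borderD, dotProduct, mulVec, Fintype.sum_sum_type, fromBlocks_apply₁₁,
    fromBlocks_apply₁₂, fromBlocks_apply₂₁, fromBlocks_apply₂₂, of_apply, Sum.elim_inl, Sum.elim_inr,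
    Finset.univ_unique, Finset.sum_singleton, mul_add, Finset.sum_add_distrib, Finset.mul_sum]
  have : ∀ i, x i * (-a i * s) = - (s * (a i * x i)) := fun i => by ring
  have h2 : ∀ i, s * (-a i * x i) = - (s * (a i * x i)) := fun i => by ring
  have h3 : ∀ i, 2 * s * (a i * x i) = (s * (a i * x i)) + (s * (a i * x i)) := fun i => by ring
  simp only [this, h2, h3, Finset.sum_add_distrib, Finset.sum_neg_distrib]
  ring

theorem q_1 {n : ℕ} (s : ℝ) (x : Fin n → ℝ) :
    lft s x ⬝ᵥ (sdoM1 n) *ᵥ lft s x = x ⬝ᵥ x := by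
  simp [lft, sdoM1, fromBlocks_mulVec, dotProduct, Fintype.sum_sum_type, Sum.elim_comp_inr]

theorem q_3 {n : ℕ} (s : ℝ) (x : Fin n → ℝ) :
    lft s x ⬝ᵥ (sdoM3 n) *ᵥ lft s x = s^2 := by
  simp [lft, sdoM3, fromBlocks_mulVec, dotProduct, Fintype.sum_sum_type]
  ring

theorem M2_eq {n : ℕ} (b : Fin n → ℝ) : sdoM2 b = borderD 0 (fun i => - b i / 2) 0 := by
  ext (i|i) (j|j) <;> simp [sdoM2, borderD, neg_div]

theorem q_2 {n : ℕ} (b : Fin n → ℝ) (s : ℝ) (x : Fin n → ℝ) :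
    lft s x ⬝ᵥ (sdoM2 b) *ᵥ lft s x = s * (b ⬝ᵥ x) := by
  rw [M2_eq, q_border]
  have : (fun i => - b i / 2) = (-1/2 : ℝ) • b := by ext i; simp; ring
  rw [this, smul_dotProduct]
  simp; ring

theorem D2_eq {n : ℕ} (A : Matrix (Fin n) (Fin n) ℝ) (a b : Fin n → ℝ) (t l : ℝ) :
    borderD2 A a b t l = borderD A a 0 + l • sdoM2 b + t • sdoM3 n := by
  ext (i|i) (j|j) <;> simp [sdoM2, sdoM3, borderD, borderD2] <;> ring

theorem M13 (n : ℕ) : sdoM1 n + sdoM3 n = 1 := by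
  ext (i|i) (j|j) <;> simp [sdoM1, sdoM3, Matrix.one_apply]

theorem border_herm {n : ℕ} {A : Matrix (Fin n) (Fin n) ℝ} (hA : A.IsHermitian) (a : Fin n → ℝ)
    (t : ℝ) : (borderD A a t).IsHermitian := by
  ext (i|i) (j|j) <;> simp [borderD]
  simpa using hA.apply i j

theorem psd_entry {ι : Type} [Fintype ι] [DecidableEq ι] {X : Matrix ι ι ℝ}
    (hX : X.PosSemidef) (i j : ι) : |X i j| ≤ X.trace := by
  have hd : ∀ k, X k k ≤ X.trace := fun k =>
    Finset.single_le_sum (f := fun k => X k k) (fun k _ => hX.diag_nonneg) (Finset.mem_univ k)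
  have hs : X j i = X i j := by simpa using hX.1.apply i j
  have h1 := hX.dotProduct_mulVec_nonneg (Pi.single i 1 + Pi.single j 1)
  have h2 := hX.dotProduct_mulVec_nonneg (Pi.single i 1 - Pi.single j 1)
  simp [mulVec_add, mulVec_sub, add_dotProduct, sub_dotProduct] at h1 h2
  have := hd i
  have := hd j
  rw [abs_le]; constructor <;> linarith

theorem psd_closed {ι : Type} [Fintype ι] : IsClosed {X : Matrix ι ι ℝ | X.PosSemidef} := by
  have : {X : Matrix ι ι ℝ | X.PosSemidef} =
      {X : Matrix ι ι ℝ | Xᴴ = X} ∩ ⋂ v : ι → ℝ, {X | 0 ≤ star v ⬝ᵥ X *ᵥ v} := by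
    ext X
    simp only [posSemidef_iff_dotProduct_mulVec, Set.mem_ofPred_eq, Set.mem_inter_iff, Set.mem_iInter]
    rfl
  rw [this]
  refine (isClosed_eq (by fun_prop) (by fun_prop)).inter (isClosed_iInter fun v =>
    isClosed_le (by fun_prop) ?_)
  exact continuous_const.dotProduct (continuous_id.matrix_mulVec continuous_const)

/-- rank-two builder -/
noncomputable def bld {n : ℕ} (e : Fin n → ℝ) (s : ℝ) (x : Fin n → ℝ) (r : ℝ) :
    Matrix (Unit ⊕ Fin n) (Unit ⊕ Fin n) ℝ :=
  vecMulVec (lft s x) (lft s x) + r • vecMulVec (lft 0 e) (lft 0 e)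

theorem bld_psd {n : ℕ} (e : Fin n → ℝ) (s : ℝ) (x : Fin n → ℝ) {r : ℝ} (hr : 0 ≤ r) :
    (bld e s x r).PosSemidef := (lft_psd s x).add ((lft_psd 0 e).smul hr)

theorem ip_bld {n : ℕ} (M : Matrix (Unit ⊕ Fin n) (Unit ⊕ Fin n) ℝ) (e : Fin n → ℝ) (s : ℝ)
    (x : Fin n → ℝ) (r : ℝ) : (M * bld e s x r).trace =
      lft s x ⬝ᵥ M *ᵥ lft s x + r * (lft 0 e ⬝ᵥ M *ᵥ lft 0 e) := by
  rw [bld, Matrix.mul_add, Matrix.trace_add, ip_vec, Matrix.mul_smul, Matrix.trace_smul, ip_vec,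
    smul_eq_mul]

theorem multipliers {n : ℕ} (A : Matrix (Fin n) (Fin n) ℝ) (a b e : Fin n → ℝ) (c Δ p : ℝ)
    (hΔ : 0 < Δ) (he : e ⬝ᵥ e = 1) (heA : e ⬝ᵥ A *ᵥ e ≤ 0)
    (hslater : ∃ x : Fin n → ℝ, x ⬝ᵥ x < Δ ∧ b ⬝ᵥ x < c)
    (hp : ∀ X : Matrix (Unit ⊕ Fin n) (Unit ⊕ Fin n) ℝ, X.PosSemidef →
      (sdoM1 n * X).trace ≤ Δ → (sdoM2 b * X).trace ≤ c → (sdoM3 n * X).trace = 1 →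
      p ≤ (borderD A a 0 * X).trace) :
    ∃ t l : ℝ, 0 ≤ l ∧ ∀ X : Matrix (Unit ⊕ Fin n) (Unit ⊕ Fin n) ℝ, X.PosSemidef →
      (sdoM1 n * X).trace + (sdoM3 n * X).trace = Δ + 1 →
      p ≤ (borderD A a 0 * X).trace + l * ((sdoM2 b * X).trace - c)
        + t * ((sdoM3 n * X).trace - 1) := by
  obtain ⟨xs, hxs1, hxs2⟩ := hslater
  set C : Set (ℝ × ℝ × ℝ) := {q | ∃ X : Matrix (Unit ⊕ Fin n) (Unit ⊕ Fin n) ℝ, X.PosSemidef ∧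
      (sdoM1 n * X).trace + (sdoM3 n * X).trace = Δ + 1 ∧
      (borderD A a 0 * X).trace - p < q.1 ∧ (sdoM2 b * X).trace - c ≤ q.2.1 ∧
      (sdoM3 n * X).trace - 1 = q.2.2} with hC
  have hconv : Convex ℝ C := by
    rintro ⟨u, w, s⟩ ⟨X, hX, h1, h2, h3, h4⟩ ⟨u', w', s'⟩ ⟨X', hX', h1', h2', h3', h4'⟩ α β hα hβ hαβ
    dsimp only at h2 h3 h4 h2' h3' h4'
    refine ⟨α • X + β • X', (hX.smul hα).add (hX'.smul hβ), ?_, ?_, ?_, ?_⟩ <;>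
      simp only [Matrix.mul_add, Matrix.mul_smul, Matrix.trace_add, Matrix.trace_smul, smul_eq_mul,
        Prod.fst_add, Prod.snd_add, Prod.smul_fst, Prod.smul_snd]
    · linear_combination α * h1 + β * h1' + (Δ + 1) * hαβ
    · rcases hα.eq_or_lt with h | h
      · subst h
        have : β = 1 := by linarith
        subst this; linarith
      · have := mul_lt_mul_of_pos_left h2 h
        have := mul_le_mul_of_nonneg_left h2'.le hβ
        have : p = α * p + β * p := by rw [← add_mul, hαβ, one_mul]
        linarith
    · have := mul_le_mul_of_nonneg_left h3 hα
      have := mul_le_mul_of_nonneg_left h3' hβ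
      have : c = α * c + β * c := by rw [← add_mul, hαβ, one_mul]
      linarith
    · linear_combination α * h4 + β * h4' + hαβ
  have h0 : (0 : ℝ × ℝ × ℝ) ∉ interior C := by
    intro h
    obtain ⟨X, hX, h1, h2, h3, h4⟩ := interior_subset h
    simp only [Prod.fst_zero, Prod.snd_zero] at h2 h3 h4
    have := hp X hX (by linarith) (by linarith) (by linarith)
    linarith
  have hint : (interior C).Nonempty := by
    refine ⟨(-p + 1, -c + 1, 0), ?_⟩
    rw [mem_interior]
    refine ⟨{q | -p < q.1 ∧ -c < q.2.1 ∧ -1 < q.2.2 ∧ q.2.2 < Δ}, ?_, ?_, ?_⟩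
    · rintro ⟨u, w, s⟩ ⟨h1, h2, h3, h4⟩
      dsimp only at h1 h2 h3 h4
      have hsq : Real.sqrt (1 + s) ^ 2 = 1 + s := Real.sq_sqrt (by linarith)
      have hneg : (Δ - s) * (e ⬝ᵥ A *ᵥ e) ≤ 0 :=
        mul_nonpos_of_nonneg_of_nonpos (by linarith) heA
      refine ⟨bld e (Real.sqrt (1 + s)) 0 (Δ - s), bld_psd _ _ _ (by linarith), ?_, ?_, ?_, ?_⟩ <;>
        simp only [ip_bld, q_1, q_2, q_3, q_border, he, hsq] <;> simp <;> linarith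
    · have h1 : IsOpen {q : ℝ × ℝ × ℝ | -p < q.1} := isOpen_lt (by fun_prop) (by fun_prop)
      have h2 : IsOpen {q : ℝ × ℝ × ℝ | -c < q.2.1} := isOpen_lt (by fun_prop) (by fun_prop)
      have h3 : IsOpen {q : ℝ × ℝ × ℝ | -1 < q.2.2} := isOpen_lt (by fun_prop) (by fun_prop)
      have h4 : IsOpen {q : ℝ × ℝ × ℝ | q.2.2 < Δ} := isOpen_lt (by fun_prop) (by fun_prop)
      exact h1.inter (h2.inter (h3.inter h4))
    · refine ⟨?_, ?_, ?_, ?_⟩ <;> simp [hΔ]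
  obtain ⟨f, hf0, hf⟩ := geometric_hahn_banach_of_nonempty_interior_point hconv h0 hint
  obtain ⟨α, hα⟩ : ∃ α, α = - f (1, 0, 0) := ⟨_, rfl⟩
  obtain ⟨β, hβ⟩ : ∃ β, β = - f (0, 1, 0) := ⟨_, rfl⟩
  obtain ⟨γ, hγ⟩ : ∃ γ, γ = - f (0, 0, 1) := ⟨_, rfl⟩
  have hfe : ∀ u w s : ℝ, f (u, w, s) = - (α * u + β * w + γ * s) := by
    intro u w s
    have : ((u, w, s) : ℝ × ℝ × ℝ) = u • (1, 0, 0) + w • (0, 1, 0) + s • (0, 0, 1) := by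
      simp
    rw [this, map_add, map_add, map_smul, map_smul, map_smul, hα, hβ, hγ]
    simp only [smul_eq_mul]; ring
  have key : ∀ X : Matrix (Unit ⊕ Fin n) (Unit ⊕ Fin n) ℝ, X.PosSemidef →
      (sdoM1 n * X).trace + (sdoM3 n * X).trace = Δ + 1 → ∀ ε > 0, ∀ δ ≥ 0,
      0 ≤ α * ((borderD A a 0 * X).trace - p + ε) + β * ((sdoM2 b * X).trace - c + δ)
        + γ * ((sdoM3 n * X).trace - 1) := by
    intro X hX h1 ε hε δ hδ
    have := hf ((borderD A a 0 * X).trace - p + ε, (sdoM2 b * X).trace - c + δ,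
      (sdoM3 n * X).trace - 1) ⟨X, hX, h1, by simpa using hε, by simpa using hδ, rfl⟩
    rw [hfe, map_zero] at this
    linarith
  -- sample points
  have hs0 := key (bld e 1 xs (Δ - xs ⬝ᵥ xs)) (bld_psd _ _ _ (by linarith))
    (by simp only [ip_bld, q_1, q_3, he]; ring)
  simp only [ip_bld, q_2, q_3] at hs0
  have hα0 : 0 ≤ α := by
    by_contra hneg
    push Not at hneg
    set K := (lft 1 xs ⬝ᵥ borderD A a 0 *ᵥ lft 1 xs + (Δ - xs ⬝ᵥ xs) * (lft 0 e ⬝ᵥ borderD A a 0 *ᵥ lft 0 e)) - p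
    set L := β * (1 * b ⬝ᵥ xs + (Δ - xs ⬝ᵥ xs) * (0 * b ⬝ᵥ e) - c + 0)
    have h1 := hs0 (|K| + (|L| + 1) / (-α)) (by
      have : 0 < (|L| + 1) / (-α) := div_pos (by positivity) (by linarith)
      positivity) 0 le_rfl
    have h2 : α * ((|L| + 1) / (-α)) = - (|L| + 1) := by
      have := hneg.ne
      field_simp
    have h3 : α * (K + |K|) ≤ 0 :=
      mul_nonpos_of_nonpos_of_nonneg hneg.le (by linarith [neg_abs_le K])
    have h4 := le_abs_self L
    nlinarith
  have hβ0 : 0 ≤ β := by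
    by_contra hneg
    push Not at hneg
    set K := α * ((lft 1 xs ⬝ᵥ borderD A a 0 *ᵥ lft 1 xs + (Δ - xs ⬝ᵥ xs) * (lft 0 e ⬝ᵥ borderD A a 0 *ᵥ lft 0 e)) - p + 1)
    have h1 := hs0 1 one_pos ((c - b ⬝ᵥ xs) + (|K| + 1) / (-β)) (by
      have : 0 < (|K| + 1) / (-β) := div_pos (by positivity) (by linarith)
      linarith)
    have h2 : β * ((|K| + 1) / (-β)) = - (|K| + 1) := by
      have := hneg.ne
      field_simp
    have h4 := le_abs_self K
    nlinarith
  have hαpos : 0 < α := by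
    rcases hα0.eq_or_lt with h | h
    swap
    · exact h
    exfalso
    have hb : β = 0 := by
      have h1 := hs0 1 one_pos 0 le_rfl
      rw [← h] at h1
      have : 0 ≤ β * (b ⬝ᵥ xs - c) := by linarith
      nlinarith
    have hg1 := key (bld e (Real.sqrt (Δ + 1)) 0 0) (bld_psd _ _ _ le_rfl)
      (by simp only [ip_bld, q_1, q_3, Real.sq_sqrt (by linarith : 0 ≤ Δ + 1)]; simp) 1 one_pos 0 le_rfl
    have hg2 := key (bld e 0 0 (Δ + 1)) (bld_psd _ _ _ (by linarith))
      (by simp only [ip_bld, q_1, q_3, he]; simp) 1 one_pos 0 le_rfl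
    simp only [ip_bld, q_3, ← h, hb, Real.sq_sqrt (by linarith : 0 ≤ Δ + 1)] at hg1 hg2
    have hg : γ = 0 := by nlinarith
    apply hf0
    ext <;> simp [hfe, ← h, hb, hg]
  refine ⟨γ / α, β / α, by positivity, ?_⟩
  intro X hX h1
  refine le_of_forall_pos_le_add fun ε hε => ?_
  have h2 := key X hX h1 ε hε 0 le_rfl
  have h3 : 0 ≤ (α * ((borderD A a 0 * X).trace - p + ε) + β * ((sdoM2 b * X).trace - c + 0)
        + γ * ((sdoM3 n * X).trace - 1)) / α := by positivity
  have h4 : (α * ((borderD A a 0 * X).trace - p + ε) + β * ((sdoM2 b * X).trace - c + 0)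
        + γ * ((sdoM3 n * X).trace - 1)) / α = ((borderD A a 0 * X).trace - p + ε) +
        β / α * ((sdoM2 b * X).trace - c) + γ / α * ((sdoM3 n * X).trace - 1) := by
    field_simp; ring
  rw [h4] at h3
  linarith

theorem feas_compact {n : ℕ} (b : Fin n → ℝ) (c Δ : ℝ) :
    IsCompact {X : Matrix (Unit ⊕ Fin n) (Unit ⊕ Fin n) ℝ | X.PosSemidef ∧
      (sdoM1 n * X).trace ≤ Δ ∧ (sdoM2 b * X).trace ≤ c ∧ (sdoM3 n * X).trace = 1} := by
  have hc : ∀ M : Matrix (Unit ⊕ Fin n) (Unit ⊕ Fin n) ℝ,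
      Continuous fun X : Matrix (Unit ⊕ Fin n) (Unit ⊕ Fin n) ℝ => (M * X).trace := fun M =>
    (continuous_const.matrix_mul continuous_id).matrix_trace
  have hbig : IsCompact (Set.pi Set.univ fun _ : Unit ⊕ Fin n => Set.pi Set.univ
      fun _ : Unit ⊕ Fin n => Set.Icc (-(Δ + 1)) (Δ + 1)) :=
    isCompact_univ_pi fun _ => isCompact_univ_pi fun _ => isCompact_Icc
  refine IsCompact.of_isClosed_subset hbig ?_ ?_
  · exact psd_closed.inter ((isClosed_le (hc _) continuous_const).inter
      ((isClosed_le (hc _) continuous_const).inter (isClosed_eq (hc _) continuous_const)))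
  · rintro X ⟨hX, h1, h2, h3⟩ i _ j _
    have h4 : X.trace = (sdoM1 n * X).trace + (sdoM3 n * X).trace := by
      rw [← Matrix.trace_add, ← Matrix.add_mul, M13, Matrix.one_mul]
    have := abs_le.1 (psd_entry hX i j)
    constructor <;> linarith

theorem exists_dir {n : ℕ} {A : Matrix (Fin n) (Fin n) ℝ} (hA : A.IsHermitian)
    (hnpd : ¬ A.PosDef) : ∃ e : Fin n → ℝ, e ⬝ᵥ e = 1 ∧ e ⬝ᵥ A *ᵥ e ≤ 0 := by
  by_contra hcon
  push Not at hcon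
  apply hnpd
  refine Matrix.PosDef.of_dotProduct_mulVec_pos hA fun x hx => ?_
  have hpos : 0 < x ⬝ᵥ x := by
    have h0 : 0 ≤ x ⬝ᵥ x := Finset.sum_nonneg fun i _ => mul_self_nonneg _
    exact h0.lt_of_ne fun h => hx (dotProduct_self_eq_zero.1 h.symm)
  have hs : Real.sqrt (x ⬝ᵥ x) * Real.sqrt (x ⬝ᵥ x) = x ⬝ᵥ x := Real.mul_self_sqrt hpos.le
  have hs0 : 0 < Real.sqrt (x ⬝ᵥ x) := Real.sqrt_pos.2 hpos
  have := hcon ((Real.sqrt (x ⬝ᵥ x))⁻¹ • x) (by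
    rw [smul_dotProduct, dotProduct_smul, smul_eq_mul, smul_eq_mul]
    nth_rewrite 3 [← hs]
    field_simp)
  rw [mulVec_smul, smul_dotProduct, dotProduct_smul, smul_eq_mul, smul_eq_mul] at this
  rw [star_trivial]
  have h2 := pos_of_mul_pos_right this (inv_pos.2 hs0).le
  exact pos_of_mul_pos_right h2 (inv_pos.2 hs0).le

theorem weak_dual {n : ℕ} {A : Matrix (Fin n) (Fin n) ℝ} (hA : A.IsHermitian) (a b : Fin n → ℝ)
    (c Δ v l1 l2 : ℝ) (h1 : 0 ≤ l1) (h2 : 0 ≤ l2) (hv : ∀ x : Fin n → ℝ, v ≤ lagr A a b c Δ x l1 l2)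
    {X : Matrix (Unit ⊕ Fin n) (Unit ⊕ Fin n) ℝ} (hX : X.PosSemidef)
    (hX1 : (sdoM1 n * X).trace ≤ Δ) (hX2 : (sdoM2 b * X).trace ≤ c)
    (hX3 : (sdoM3 n * X).trace = 1) : v ≤ (borderD A a 0 * X).trace := by
  have hH : ∀ τ : ℝ, (borderD A a 0 + l1 • sdoM1 n + l2 • sdoM2 b + τ • sdoM3 n).IsHermitian := by
    intro τ
    have e1 : (sdoM1 n).IsHermitian := by
      ext (i|i) (j|j) <;> simp [sdoM1, Matrix.one_apply, eq_comm]
    have e3 : (sdoM3 n).IsHermitian := by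
      ext (i|i) (j|j) <;> simp [sdoM3]
    have e2 : (sdoM2 b).IsHermitian := by
      rw [M2_eq]; exact border_herm Matrix.isHermitian_zero _ _
    have sm : ∀ (r : ℝ) (M : Matrix (Unit ⊕ Fin n) (Unit ⊕ Fin n) ℝ), M.IsHermitian →
        (r • M).IsHermitian := by
      intro r M hM
      rw [Matrix.IsHermitian, Matrix.conjTranspose_smul, hM, star_trivial]
    exact (((border_herm hA a 0).add (sm _ _ e1)).add (sm _ _ e2)).add (sm _ _ e3)
  have hq : ∀ (s τ : ℝ) (x : Fin n → ℝ),
      lft s x ⬝ᵥ (borderD A a 0 + l1 • sdoM1 n + l2 • sdoM2 b + τ • sdoM3 n) *ᵥ lft s x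
      = x ⬝ᵥ A *ᵥ x - 2 * s * (a ⬝ᵥ x) + l1 * (x ⬝ᵥ x) + l2 * (s * (b ⬝ᵥ x)) + τ * s ^ 2 := by
    intro s τ x
    simp only [Matrix.add_mulVec, Matrix.smul_mulVec, dotProduct_add, dotProduct_smul, q_border,
      q_1, q_2, q_3, smul_eq_mul]
    ring
  have hne : ∀ (s : ℝ) (x : Fin n → ℝ), s ≠ 0 → 0 ≤ x ⬝ᵥ A *ᵥ x - 2 * s * (a ⬝ᵥ x)
      + l1 * (x ⬝ᵥ x) + l2 * (s * (b ⬝ᵥ x)) + (-v - l1 * Δ - l2 * c) * s ^ 2 := by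
    intro s x hs
    have h := hv (s⁻¹ • x)
    simp only [lagr, objQ, mulVec_smul, smul_dotProduct, dotProduct_smul, smul_eq_mul] at h
    have h' := mul_le_mul_of_nonneg_left h (sq_nonneg s)
    have e : s ^ 2 * (s⁻¹ * (s⁻¹ * x ⬝ᵥ A *ᵥ x) - 2 * (s⁻¹ * a ⬝ᵥ x)
        + l1 * (s⁻¹ * (s⁻¹ * x ⬝ᵥ x) - Δ) + l2 * (s⁻¹ * b ⬝ᵥ x - c))
        = x ⬝ᵥ A *ᵥ x - 2 * s * (a ⬝ᵥ x)
          + l1 * (x ⬝ᵥ x) + l2 * (s * (b ⬝ᵥ x)) + (- l1 * Δ - l2 * c) * s ^ 2 := by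
      field_simp; ring
    rw [e] at h'
    linarith
  have hall : ∀ (s : ℝ) (x : Fin n → ℝ), 0 ≤ x ⬝ᵥ A *ᵥ x - 2 * s * (a ⬝ᵥ x)
      + l1 * (x ⬝ᵥ x) + l2 * (s * (b ⬝ᵥ x)) + (-v - l1 * Δ - l2 * c) * s ^ 2 := by
    intro s x
    have hcont : Continuous fun s : ℝ => x ⬝ᵥ A *ᵥ x - 2 * s * (a ⬝ᵥ x)
      + l1 * (x ⬝ᵥ x) + l2 * (s * (b ⬝ᵥ x)) + (-v - l1 * Δ - l2 * c) * s ^ 2 := by fun_prop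
    have hcl := (isClosed_le continuous_const hcont).closure_subset_iff.2
      (fun s hs => hne s x hs : ({0}ᶜ : Set ℝ) ⊆ _)
    exact hcl (dense_compl_singleton (0 : ℝ) s)
  have hS : (borderD A a 0 + l1 • sdoM1 n + l2 • sdoM2 b
      + (-v - l1 * Δ - l2 * c) • sdoM3 n).PosSemidef := by
    refine Matrix.PosSemidef.of_dotProduct_mulVec_nonneg (hH _) fun y => ?_
    have hy : y = lft (y (Sum.inl ())) (fun i => y (Sum.inr i)) := by
      ext (i|i) <;> rfl
    rw [star_trivial, hy, hq]
    exact hall _ _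
  have := ip_nonneg hS hX
  simp only [Matrix.add_mul, Matrix.smul_mul, Matrix.trace_add, Matrix.trace_smul, smul_eq_mul,
    hX3] at this
  have := mul_le_mul_of_nonneg_left hX1 h1
  have := mul_le_mul_of_nonneg_left hX2 h2
  linarith

/-- Tightness of the eigenvalue dual with respect to the SDO relaxation,
with attainment of both optimal values. -/
theorem stmt7 {n : ℕ} (hn : 1 ≤ n) (A : Matrix (Fin n) (Fin n) ℝ) (hA : A.IsHermitian)
    (hnpd : ¬ A.PosDef) (a b : Fin n → ℝ) (c Δ : ℝ) (hΔ : 0 < Δ)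
    (hslater : ∃ x : Fin n → ℝ, x ⬝ᵥ x < Δ ∧ b ⬝ᵥ x < c) :
    dstar A a b c Δ = drstar A a b c Δ ∧
    (∃ t l : ℝ, 0 ≤ l ∧ ktl A a b c Δ t l = dstar A a b c Δ ∧
      ∀ t' l' : ℝ, 0 ≤ l' → ktl A a b c Δ t' l' ≤ ktl A a b c Δ t l) ∧
    (∃ X : Matrix (Unit ⊕ Fin n) (Unit ⊕ Fin n) ℝ, X.PosSemidef ∧
      (sdoM1 n * X).trace ≤ Δ ∧ (sdoM2 b * X).trace ≤ c ∧
      (sdoM3 n * X).trace = 1 ∧ (borderD A a 0 * X).trace = drstar A a b c Δ) := by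
  obtain ⟨e, he, heA⟩ := exists_dir hA hnpd
  obtain ⟨xs, hxs1, hxs2⟩ := id hslater
  have hc : Continuous fun X : Matrix (Unit ⊕ Fin n) (Unit ⊕ Fin n) ℝ =>
      (borderD A a 0 * X).trace := (continuous_const.matrix_mul continuous_id).matrix_trace
  obtain ⟨X0, ⟨hX0, hX1, hX2, hX3⟩, hmin⟩ := (feas_compact b c Δ).exists_isMinOn
    ⟨bld e 1 xs 0, bld_psd _ _ _ le_rfl, by simp [ip_bld, q_1, hxs1.le],
      by simp [ip_bld, q_2, hxs2.le], by simp [ip_bld, q_3]⟩ hc.continuousOn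
  obtain ⟨p, hp⟩ : ∃ p, p = (borderD A a 0 * X0).trace := ⟨_, rfl⟩
  have hpmin : ∀ X : Matrix (Unit ⊕ Fin n) (Unit ⊕ Fin n) ℝ, X.PosSemidef →
      (sdoM1 n * X).trace ≤ Δ → (sdoM2 b * X).trace ≤ c → (sdoM3 n * X).trace = 1 →
      p ≤ (borderD A a 0 * X).trace := fun X h0 h1 h2 h3 => by
    rw [hp]; exact hmin ⟨h0, h1, h2, h3⟩
  have hdr : drstar A a b c Δ = p := by
    refine IsLeast.csInf_eq ⟨⟨X0, hX0, hX1, hX2, hX3, hp⟩, ?_⟩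
    rintro v ⟨X, h0, h1, h2, h3, rfl⟩
    exact hpmin X h0 h1 h2 h3
  have htr : ∀ X : Matrix (Unit ⊕ Fin n) (Unit ⊕ Fin n) ℝ,
      (sdoM1 n * X).trace + (sdoM3 n * X).trace = X.trace := fun X => by
    rw [← Matrix.trace_add, ← Matrix.add_mul, M13, Matrix.one_mul]
  have hD : ∀ (t l : ℝ) (X : Matrix (Unit ⊕ Fin n) (Unit ⊕ Fin n) ℝ),
      (borderD2 A a b t l * X).trace = (borderD A a 0 * X).trace + l * (sdoM2 b * X).trace
        + t * (sdoM3 n * X).trace := fun t l X => by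
    rw [D2_eq]
    simp only [Matrix.add_mul, Matrix.smul_mul, Matrix.trace_add, Matrix.trace_smul, smul_eq_mul]
  have hspec := fun t l => lamMin_spec (M := borderD2 A a b t l) (border_herm hA _ _)
  -- upper bound on the eigenvalue dual
  have hub : ∀ t' l' : ℝ, 0 ≤ l' → ktl A a b c Δ t' l' ≤ p := by
    intro t l hl
    obtain ⟨X1, hX1d⟩ : ∃ X1, X1 = X0 + (Δ - (sdoM1 n * X0).trace) •
      vecMulVec (lft 0 e) (lft 0 e) := ⟨_, rfl⟩
    have hr : 0 ≤ Δ - (sdoM1 n * X0).trace := by linarith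
    have hps : X1.PosSemidef := by rw [hX1d]; exact hX0.add ((lft_psd 0 e).smul hr)
    have hip : ∀ M : Matrix (Unit ⊕ Fin n) (Unit ⊕ Fin n) ℝ, (M * X1).trace = (M * X0).trace +
        (Δ - (sdoM1 n * X0).trace) * (lft 0 e ⬝ᵥ M *ᵥ lft 0 e) := fun M => by
      rw [hX1d, Matrix.mul_add, Matrix.trace_add, Matrix.mul_smul, Matrix.trace_smul, ip_vec,
        smul_eq_mul]
    have h := ip_nonneg (hspec t l).2 hps
    rw [Matrix.sub_mul, Matrix.trace_sub, Matrix.smul_mul, Matrix.one_mul, Matrix.trace_smul,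
      smul_eq_mul, hD, ← htr X1, hip, hip, hip, hip, q_1, q_2, q_3, q_border, he, hX3, ← hp] at h
    have h5 := mul_nonpos_of_nonneg_of_nonpos hr heA
    have h6 := mul_le_mul_of_nonneg_left hX2 hl
    simp only [ktl]
    ring_nf at h h5 h6 ⊢
    linarith
  obtain ⟨t, l, hl, hmul⟩ := multipliers A a b e c Δ p hΔ he heA hslater hpmin
  have hlb : p ≤ ktl A a b c Δ t l := by
    obtain ⟨v, hv0, hv⟩ := (hspec t l).1
    have hvv : 0 < v ⬝ᵥ v := by
      have h0 : 0 ≤ v ⬝ᵥ v := Finset.sum_nonneg fun i _ => mul_self_nonneg _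
      exact h0.lt_of_ne fun h => hv0 (dotProduct_self_eq_zero.1 h.symm)
    have hr : 0 ≤ (Δ + 1) / (v ⬝ᵥ v) := by positivity
    have hps : (vecMulVec v v).PosSemidef := by simpa using posSemidef_vecMulVec_self_star v
    have h := hmul (((Δ + 1) / (v ⬝ᵥ v)) • vecMulVec v v) (hps.smul hr) (by
      rw [htr, Matrix.trace_smul, Matrix.trace_vecMulVec, smul_eq_mul]
      field_simp)
    have h2 := hD t l (((Δ + 1) / (v ⬝ᵥ v)) • vecMulVec v v)
    have h3 : (borderD2 A a b t l * (((Δ + 1) / (v ⬝ᵥ v)) • vecMulVec v v)).trace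
        = (Δ + 1) * lambdaMin (borderD2 A a b t l) := by
      rw [Matrix.mul_smul, Matrix.trace_smul, ip_vec, hv, dotProduct_smul, smul_eq_mul, smul_eq_mul]
      field_simp
    rw [ktl, ← h3, h2]
    linarith
  have hk : ktl A a b c Δ t l = p := le_antisymm (hub t l hl) hlb
  have hds : dstar A a b c Δ = p := by
    refine IsGreatest.csSup_eq ⟨?_, ?_⟩
    · have hps := (hspec t l).2
      have hq : ∀ s x, 0 ≤ lft s x ⬝ᵥ (borderD2 A a b t l) *ᵥ lft s x
          - lambdaMin (borderD2 A a b t l) * (x ⬝ᵥ x + s ^ 2) := by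
        intro s x
        have h := hps.dotProduct_mulVec_nonneg (lft s x)
        rw [← M13] at h
        simpa only [star_trivial, Matrix.sub_mulVec, Matrix.smul_mulVec, Matrix.add_mulVec,
          dotProduct_sub, dotProduct_smul, dotProduct_add, q_1, q_3, smul_eq_mul] using h
      have hneg : lambdaMin (borderD2 A a b t l) ≤ 0 := by
        have h := hq 0 e
        rw [borderD2, q_border, he] at h
        simp only [borderD2]
        linarith
      refine ⟨-lambdaMin (borderD2 A a b t l), l, by linarith, hl, fun x => ?_⟩
      have h := hq 1 x
      rw [D2_eq, Matrix.add_mulVec, Matrix.add_mulVec, dotProduct_add, dotProduct_add,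
        Matrix.smul_mulVec, Matrix.smul_mulVec, dotProduct_smul, dotProduct_smul, q_border, q_2,
        q_3, ← D2_eq, smul_eq_mul, smul_eq_mul] at h
      rw [← hk, ktl, lagr, objQ]
      linarith
    · rintro v ⟨l1, l2, h1, h2, hv⟩
      rw [hp]
      exact weak_dual hA a b c Δ v l1 l2 h1 h2 hv hX0 hX1 hX2 hX3
  refine ⟨hds.trans hdr.symm, ⟨t, l, hl, hk.trans hds.symm, fun t' l' hl' => ?_⟩,
    X0, hX0, hX1, hX2, hX3, by rw [hdr, hp]⟩
  rw [hk]; exact hub t' l' hl'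
end
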